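/- Let C be a code in H(m,q) with |C| ≥ 2 and minimum distance δ = m. Then there exists x ∈ Aut(Γ) with C^x ⊆ Rep(m,q). Moreover, if C is 1-regular then there exists x ∈ Aut(Γ) with C^x = Rep(m,q); and if C is 2-regular and m ≥ 5, then q = 2 and there exists x ∈ Aut(Γ) with C^x = Rep(m,2). -/

import Mathlib

/-!
Two distinct codewords differ in all `m` coordinates, so every coordinate projection is injective
on `C`. Hence, for each `i`, the partial map `α i ↦ α 0` (`α ∈ C`) is a well-defined injection and
extends to a permutation of the finite set `Q`; applying these permutations coordinatewise
sends `C` into the repetition code (`exists_image_subset_repCode`).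

Automorphisms are isometries, so they preserve `s`-regularity (`isSReg_image`), and one may assume
that `C` consists of constant words. By the triangle inequality, a vertex at distance `i` from a
codeword, with `2 * i ≤ m`, lies in `C_i` (`mem_cell`). The codewords at distance `m` from a
vertex `γ` are those whose constant value does not occur in `γ`. So `i`-regularity fails as soon
as the sets of such codewords for two vertices of `C_i` are nested but distinct
(`not_isSReg_of_mem_cell`).

* If `a ≠ a'` are values of codewords and `b` is not one, compare `(a,…,a,b)` and `(a,…,a,a')`,
  both in `C_1`. Thus a `1`-regular code is the whole repetition code.
* If `a, b, c` are distinct elements of `Q`, compare `(a,…,a,b,b)` and `(a,…,a,b,c)`, both in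
  `C_2`. Thus `2`-regularity forces `q = 2`.
-/

namespace CTC

variable {m : ℕ} {Q : Type*}

/-- The automorphism of the Hamming graph `H(m,q)` given by the pair `(g, σ)`,
acting on a vertex `α` by `(α^x) i = (g (σ⁻¹ i)) (α (σ⁻¹ i))`. -/
def toPerm (g : Fin m → Equiv.Perm Q) (σ : Equiv.Perm (Fin m)) :
    Equiv.Perm (Fin m → Q) :=
  (Equiv.piCongrRight g).trans (σ.arrowCongr (Equiv.refl Q))

@[simp] lemma toPerm_apply (g : Fin m → Equiv.Perm Q) (σ : Equiv.Perm (Fin m))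
    (α : Fin m → Q) (i : Fin m) :
    toPerm g σ α i = g (σ⁻¹ i) (α (σ⁻¹ i)) := rfl

lemma toPerm_one : toPerm (fun _ : Fin m => (1 : Equiv.Perm Q)) 1 = 1 := by
  ext α i
  rfl

lemma toPerm_mul (g h : Fin m → Equiv.Perm Q) (σ τ : Equiv.Perm (Fin m)) :
    toPerm g σ * toPerm h τ = toPerm (fun j => g (τ j) * h j) (σ * τ) := by
  ext α i
  simp [toPerm_apply, Equiv.Perm.mul_apply]

lemma toPerm_inv (g : Fin m → Equiv.Perm Q) (σ : Equiv.Perm (Fin m)) :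
    (toPerm g σ)⁻¹ = toPerm (fun i => (g (σ⁻¹ i))⁻¹) σ⁻¹ := by
  rw [inv_eq_iff_mul_eq_one, toPerm_mul]
  have h1 : (fun j => g (σ⁻¹ j) * (g (σ⁻¹ j))⁻¹) = fun _ : Fin m => (1 : Equiv.Perm Q) := by
    funext j; simp
  have h2 : σ * σ⁻¹ = 1 := by simp
  rw [show (fun j => g ((σ⁻¹ : Equiv.Perm (Fin m)) j) * (g (σ⁻¹ j))⁻¹)
      = fun _ : Fin m => (1 : Equiv.Perm Q) from h1, h2, toPerm_one]

/-- The automorphism group of the Hamming graph, as a subgroup of the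
permutations of the vertex set. -/
def AutG (m : ℕ) (Q : Type*) : Subgroup (Equiv.Perm (Fin m → Q)) where
  carrier := {x | ∃ g σ, x = toPerm g σ}
  one_mem' := ⟨fun _ => 1, 1, toPerm_one.symm⟩
  mul_mem' := by
    rintro x y ⟨g, σ, rfl⟩ ⟨h, τ, rfl⟩
    exact ⟨_, _, toPerm_mul g h σ τ⟩
  inv_mem' := by
    rintro x ⟨g, σ, rfl⟩
    exact ⟨_, _, toPerm_inv g σ⟩

/-- The base group `B` of `Aut(Γ)`: the automorphisms `(g, σ)` with `σ = 1`. -/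
def BaseG (m : ℕ) (Q : Type*) : Subgroup (Equiv.Perm (Fin m → Q)) where
  carrier := {x | ∃ g, x = toPerm g 1}
  one_mem' := ⟨fun _ => 1, toPerm_one.symm⟩
  mul_mem' := by
    rintro x y ⟨g, rfl⟩ ⟨h, rfl⟩
    refine ⟨fun j => g j * h j, ?_⟩
    rw [toPerm_mul]
    simp
  inv_mem' := by
    rintro x ⟨g, rfl⟩
    refine ⟨fun i => (g i)⁻¹, ?_⟩
    rw [toPerm_inv]
    simp

/-- The projection `μ(X)` of a subgroup `X ≤ Aut(Γ)` to the group of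
permutations of the coordinates. -/
def ProjGroup (X : Subgroup (Equiv.Perm (Fin m → Q))) : Subgroup (Equiv.Perm (Fin m)) where
  carrier := {σ | ∃ g, toPerm g σ ∈ X}
  one_mem' := ⟨fun _ => 1, by rw [toPerm_one]; exact X.one_mem⟩
  mul_mem' := by
    rintro σ τ ⟨g, hg⟩ ⟨h, hh⟩
    exact ⟨fun j => g (τ j) * h j, by rw [← toPerm_mul]; exact X.mul_mem hg hh⟩
  inv_mem' := by
    rintro σ ⟨g, hg⟩
    exact ⟨fun i => (g (σ⁻¹ i))⁻¹, by rw [← toPerm_inv]; exact X.inv_mem hg⟩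

variable [DecidableEq Q]

/-- `d(γ, C)`: the distance from a vertex `γ` to the code `C`. -/
noncomputable def distTo (C : Set (Fin m → Q)) (γ : Fin m → Q) : ℕ :=
  sInf {d | ∃ β ∈ C, hammingDist γ β = d}

/-- `C_i`: the set of vertices at distance `i` from the code `C`. -/
def cell (C : Set (Fin m → Q)) (i : ℕ) : Set (Fin m → Q) :=
  {γ | distTo C γ = i}

/-- The covering radius `ρ` of the code `C`. -/
noncomputable def covRad (C : Set (Fin m → Q)) : ℕ :=
  sSup {e | ∃ γ, distTo C γ = e}

/-- `S` is a single orbit of the subgroup `X`. -/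
def IsOrbitOf (X : Subgroup (Equiv.Perm (Fin m → Q))) (S : Set (Fin m → Q)) : Prop :=
  ∃ γ, S = {β | ∃ x ∈ X, x γ = β}

/-- `C` is `(X,s)`-neighbour transitive: `C_i` is an `X`-orbit for `0 ≤ i ≤ s`. -/
def IsNT (C : Set (Fin m → Q)) (X : Subgroup (Equiv.Perm (Fin m → Q))) (s : ℕ) : Prop :=
  ∀ i ≤ s, IsOrbitOf X (cell C i)

/-- `C` is `X`-completely transitive: `C_i` is an `X`-orbit for `0 ≤ i ≤ ρ`. -/
def IsCT (C : Set (Fin m → Q)) (X : Subgroup (Equiv.Perm (Fin m → Q))) : Prop :=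
  IsNT C X (covRad C)

/-- `δ` is the minimum distance of the code `C`. -/
def IsMinDist (C : Set (Fin m → Q)) (δ : ℕ) : Prop :=
  IsLeast {d | ∃ α ∈ C, ∃ β ∈ C, α ≠ β ∧ hammingDist α β = d} δ

/-- The repetition code `Rep(m,q)`: the set of constant vertices. -/
def RepCode (m : ℕ) (Q : Type*) : Set (Fin m → Q) := {α | ∃ a, α = fun _ => a}

/-- Two codes are equivalent if one is the image of the other under an
automorphism of the Hamming graph. -/
def CodeEquiv (C C' : Set (Fin m → Q)) : Prop :=
  ∃ x ∈ AutG m Q, ⇑x '' C = C'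

/-- `Γ_k(γ)`: the set of vertices at Hamming distance `k` from `γ`. -/
def sphere (γ : Fin m → Q) (k : ℕ) : Set (Fin m → Q) := {β | hammingDist γ β = k}

/-- `C` is `s`-regular. -/
def IsSReg (C : Set (Fin m → Q)) (s : ℕ) : Prop :=
  ∀ i ≤ s, ∀ k ≤ m, ∀ γ₁ ∈ cell C i, ∀ γ₂ ∈ cell C i,
    (sphere γ₁ k ∩ C).ncard = (sphere γ₂ k ∩ C).ncard

/-- `C` is completely regular. -/
def IsCR (C : Set (Fin m → Q)) : Prop := IsSReg C (covRad C)

end CTC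

/-! ### Isometries, regularity and the repetition code -/

namespace CTC

variable {m : ℕ} {Q : Type*} [DecidableEq Q]

lemma hammingDist_toPerm (g : Fin m → Equiv.Perm Q) (σ : Equiv.Perm (Fin m))
    (α β : Fin m → Q) : hammingDist (toPerm g σ α) (toPerm g σ β) = hammingDist α β := by
  unfold hammingDist
  refine Finset.card_equiv σ⁻¹ fun i => ?_
  simp [toPerm_apply]

lemma hammingDist_of_mem_autG {x : Equiv.Perm (Fin m → Q)} (hx : x ∈ AutG m Q)
    (α β : Fin m → Q) : hammingDist (x α) (x β) = hammingDist α β := by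
  obtain ⟨g, σ, rfl⟩ := hx
  exact hammingDist_toPerm g σ α β

lemma distTo_image {x : Equiv.Perm (Fin m → Q)} (hx : x ∈ AutG m Q) (C : Set (Fin m → Q))
    (γ : Fin m → Q) : distTo (x '' C) (x γ) = distTo C γ := by
  simp only [distTo, Set.exists_mem_image, hammingDist_of_mem_autG hx]

lemma sphere_inter_image {x : Equiv.Perm (Fin m → Q)} (hx : x ∈ AutG m Q)
    (C : Set (Fin m → Q)) (γ : Fin m → Q) (k : ℕ) :
    sphere (x γ) k ∩ x '' C = x '' (sphere γ k ∩ C) := by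
  ext β
  constructor
  · rintro ⟨h, α, hα, rfl⟩
    exact ⟨α, ⟨(hammingDist_of_mem_autG hx γ α).symm.trans h, hα⟩, rfl⟩
  · rintro ⟨α, ⟨h, hα⟩, rfl⟩
    exact ⟨(hammingDist_of_mem_autG hx γ α).trans h, α, hα, rfl⟩

lemma isSReg_image {x : Equiv.Perm (Fin m → Q)} (hx : x ∈ AutG m Q) {C : Set (Fin m → Q)}
    {s : ℕ} (h : IsSReg C s) : IsSReg (x '' C) s := by
  intro i hi k hk γ₁ h₁ γ₂ h₂
  obtain ⟨γ₁, rfl⟩ := x.surjective γ₁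
  obtain ⟨γ₂, rfl⟩ := x.surjective γ₂
  rw [sphere_inter_image hx, sphere_inter_image hx, Set.ncard_image_of_injective _ x.injective,
    Set.ncard_image_of_injective _ x.injective]
  exact h i hi k hk γ₁ ((distTo_image hx C γ₁).symm.trans h₁) γ₂
    ((distTo_image hx C γ₂).symm.trans h₂)

lemma hammingDist_eq_length_iff (α β : Fin m → Q) :
    hammingDist α β = m ↔ ∀ i, α i ≠ β i := by
  have h := Finset.card_filter_eq_iff (s := (Finset.univ : Finset (Fin m)))
    (p := fun i => α i ≠ β i)
  simpa [hammingDist] using h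

/-- A vertex within half the minimum distance of a codeword has that codeword as a nearest one. -/
lemma mem_cell {C : Set (Fin m → Q)}
    (hC : ∀ α ∈ C, ∀ β ∈ C, α ≠ β → hammingDist α β = m) {i : ℕ} (hi : 2 * i ≤ m)
    {γ β : Fin m → Q} (hβ : β ∈ C) (h : hammingDist γ β = i) : γ ∈ cell C i := by
  refine IsLeast.csInf_eq ⟨⟨β, hβ, h⟩, ?_⟩
  rintro _ ⟨α, hα, rfl⟩
  by_cases hαβ : β = α
  · rw [← hαβ, h]
  · have h1 := hC β hβ α hα hαβ
    have h2 := hammingDist_triangle β γ α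
    rw [hammingDist_comm β γ] at h2
    omega

/-- Regularity fails if two vertices of `C_i` have nested but distinct sets of codewords at
distance `m`; `β` is the codeword separating these sets. -/
lemma not_isSReg_of_mem_cell [Finite Q] {C : Set (Fin m → Q)} {s i : ℕ} (hi : i ≤ s)
    {γ₁ γ₂ β : Fin m → Q} (h₁ : γ₁ ∈ cell C i) (h₂ : γ₂ ∈ cell C i)
    (hsub : ∀ α ∈ C, (∀ j, γ₂ j ≠ α j) → ∀ j, γ₁ j ≠ α j)
    (hβ : β ∈ C) (hβ₁ : ∀ j, γ₁ j ≠ β j) (hβ₂ : ∃ j, γ₂ j = β j) : ¬ IsSReg C s := by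
  intro h
  refine (Set.ncard_lt_ncard (s := sphere γ₂ m ∩ C) (t := sphere γ₁ m ∩ C) ?_
    (Set.toFinite _)).ne' (h i hi m le_rfl γ₁ h₁ γ₂ h₂)
  refine (Set.ssubset_iff_of_subset ?_).2
    ⟨β, ⟨(hammingDist_eq_length_iff _ _).2 hβ₁, hβ⟩, ?_⟩
  · rintro α ⟨hα, hαC⟩
    exact ⟨(hammingDist_eq_length_iff _ _).2
      (hsub α hαC ((hammingDist_eq_length_iff _ _).1 hα)), hαC⟩
  · rintro ⟨hβ', -⟩
    obtain ⟨j, hj⟩ := hβ₂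
    exact (hammingDist_eq_length_iff _ _).1 hβ' j hj

/-- A code all of whose distinct codewords differ everywhere is equivalent to a subcode of the
repetition code. -/
lemma exists_image_subset_repCode [Fintype Q] (hm : 0 < m) {C : Set (Fin m → Q)}
    (hC : ∀ α ∈ C, ∀ β ∈ C, α ≠ β → hammingDist α β = m) :
    ∃ x ∈ AutG m Q, ⇑x '' C ⊆ RepCode m Q := by
  have hinj : ∀ i : Fin m, Set.InjOn (fun α : Fin m → Q => α i) C := by
    intro i α hα β hβ hαβ
    by_contra hne
    exact (hammingDist_eq_length_iff _ _).1 (hC α hα β hβ hne) i hαβ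
  let i₀ : Fin m := ⟨0, hm⟩
  have hg : ∀ i : Fin m, ∃ g : Equiv.Perm Q, ∀ α ∈ C, g (α i) = α i₀ := by
    intro i
    classical
    let e (j : Fin m) := Equiv.Set.imageOfInjOn (fun α : Fin m → Q => α j) C (hinj j)
    refine ⟨Equiv.extendSubtype ((e i).symm.trans (e i₀)), fun α hα => ?_⟩
    rw [Equiv.extendSubtype_apply_of_mem _ _ (Set.mem_image_of_mem (fun α => α i) hα)]
    have : (e i).symm ⟨α i, Set.mem_image_of_mem (fun α => α i) hα⟩ = ⟨α, hα⟩ := by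
      rw [Equiv.symm_apply_eq]
      rfl
    rw [Equiv.trans_apply]
    erw [this]
    rfl
  choose g hg using hg
  refine ⟨toPerm g 1, ⟨g, 1, rfl⟩, ?_⟩
  rintro _ ⟨α, hα, rfl⟩
  exact ⟨α i₀, funext fun i => hg i α hα⟩

lemma hammingDist_const {a b : Q} (h : a ≠ b) :
    hammingDist (fun _ : Fin m => a) (fun _ => b) = m :=
  (hammingDist_eq_length_iff _ _).2 fun _ => h

lemma hammingDist_of_subset_repCode {C : Set (Fin m → Q)} (hC : C ⊆ RepCode m Q) :
    ∀ α ∈ C, ∀ β ∈ C, α ≠ β → hammingDist α β = m := by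
  intro α hα β hβ hne
  obtain ⟨a, rfl⟩ := hC hα
  obtain ⟨b, rfl⟩ := hC hβ
  exact hammingDist_const fun h => hne (by rw [h])

lemma hammingDist_update_const (i : Fin m) {a b : Q} (h : b ≠ a) :
    hammingDist (Function.update (fun _ : Fin m => a) i b) (fun _ => a) = 1 := by
  rw [hammingDist, Finset.card_eq_one]
  refine ⟨i, ?_⟩
  ext j
  by_cases hj : j = i <;> simp [Function.update_apply, hj, h]

lemma hammingDist_update_update_const {i j : Fin m} (hij : i ≠ j) {a b c : Q} (hb : b ≠ a)
    (hc : c ≠ a) :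
    hammingDist (Function.update (Function.update (fun _ : Fin m => a) i b) j c)
      (fun _ => a) = 2 := by
  rw [hammingDist, Finset.card_eq_two]
  refine ⟨i, j, hij, ?_⟩
  ext k
  by_cases hj : k = j <;> by_cases hi : k = i <;> simp [Function.update_apply, hj, hi, hc]
  all_goals grind

lemma eq_repCode_of_isSReg_one [Finite Q] (hm : 2 ≤ m) {C : Set (Fin m → Q)}
    (hC : C ⊆ RepCode m Q) (hnt : C.Nontrivial) (h : IsSReg C 1) : C = RepCode m Q := by
  refine hC.antisymm ?_
  rintro _ ⟨b, rfl⟩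
  by_contra hb
  obtain ⟨α, hα, α', hα', hne⟩ := hnt
  obtain ⟨a, rfl⟩ := hC hα
  obtain ⟨a', rfl⟩ := hC hα'
  have haa : a' ≠ a := fun h => hne (by rw [h])
  have hba : b ≠ a := fun h => hb (by rwa [h])
  have hba' : b ≠ a' := fun h => hb (by rwa [h])
  have hd := hammingDist_of_subset_repCode hC
  let i₀ : Fin m := ⟨0, by omega⟩
  let i₁ : Fin m := ⟨1, by omega⟩
  have h01 : i₁ ≠ i₀ := by simp [i₀, i₁]
  refine not_isSReg_of_mem_cell le_rfl
    (mem_cell hd (by omega) hα (hammingDist_update_const i₀ hba))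
    (mem_cell hd (by omega) hα (hammingDist_update_const i₀ haa)) ?_ hα' ?_ ⟨i₀, by simp⟩ h
  · intro β hβ hβ' j
    obtain ⟨c, rfl⟩ := hC hβ
    have h1 := hβ' i₁
    rw [Function.update_of_ne h01] at h1
    -- The entry `b` of the first vertex excludes no codeword.
    by_cases hj : j = i₀
    · subst hj
      rw [Function.update_self]
      exact fun h => hb (by rwa [h])
    · rwa [Function.update_of_ne hj]
  · intro j
    by_cases hj : j = i₀ <;> simp [hj, hba', haa.symm]

/-- Only `4 ≤ m` is needed to place both compared vertices in `C_2`. -/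
lemma card_le_two_of_isSReg_two [Fintype Q] (hm : 4 ≤ m) (h : IsSReg (RepCode m Q) 2) :
    Fintype.card Q ≤ 2 := by
  by_contra! hcard
  obtain ⟨a, b, c, hab, hac, hbc⟩ := Fintype.two_lt_card_iff.1 hcard
  have hd := hammingDist_of_subset_repCode (subset_refl (RepCode m Q))
  let i₀ : Fin m := ⟨0, by omega⟩
  let i₁ : Fin m := ⟨1, by omega⟩
  let i₂ : Fin m := ⟨2, by omega⟩
  have h01 : i₀ ≠ i₁ := by simp [i₀, i₁]
  have h20 : i₂ ≠ i₀ := by simp [i₀, i₂]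
  have h21 : i₂ ≠ i₁ := by simp [i₁, i₂]
  refine not_isSReg_of_mem_cell le_rfl
    (mem_cell hd (by omega) ⟨a, rfl⟩
      (hammingDist_update_update_const h01 hab.symm hab.symm))
    (mem_cell hd (by omega) ⟨a, rfl⟩
      (hammingDist_update_update_const h01 hab.symm hac.symm)) ?_ ⟨c, rfl⟩ ?_
    ⟨i₁, by simp⟩ h
  · rintro β ⟨e, rfl⟩ hβ j
    have h0 := hβ i₀
    have h2 := hβ i₂
    simp only [Function.update_apply, h01, h20, h21, if_true, if_false] at h0 h2 ⊢
    split_ifs <;> assumption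
  · intro j
    simp only [Function.update_apply]
    split_ifs <;> assumption

end CTC

open CTC in
/-- Lemma 2.11: a code with `δ = m` is equivalent to a subset of
the repetition code; if `1`-regular it is equivalent to `Rep(m,q)`, and if
`2`-regular with `m ≥ 5` then `q = 2` and it is equivalent to `Rep(m,2)`. -/
theorem statement9 {m q : ℕ} {Q : Type*} [Fintype Q] [DecidableEq Q]
    (hm : 2 ≤ m) (hq2 : 2 ≤ q) (hcard : Fintype.card Q = q)
    (C : Set (Fin m → Q)) (hC : 2 ≤ C.ncard)
    (hδ : IsMinDist C m) :
    (∃ x ∈ AutG m Q, ⇑x '' C ⊆ RepCode m Q) ∧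
    (IsSReg C 1 → ∃ x ∈ AutG m Q, ⇑x '' C = RepCode m Q) ∧
    (IsSReg C 2 → 5 ≤ m → q = 2 ∧ ∃ x ∈ AutG m Q, ⇑x '' C = RepCode m Q) := by
  have hd : ∀ α ∈ C, ∀ β ∈ C, α ≠ β → hammingDist α β = m := fun α hα β hβ hne =>
    le_antisymm (hammingDist_le_card_fintype.trans_eq (Fintype.card_fin m))
      (hδ.2 ⟨α, hα, β, hβ, hne, rfl⟩)
  obtain ⟨x, hx, hsub⟩ := exists_image_subset_repCode (by omega) hd
  have hnt : (x '' C).Nontrivial :=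
    ((Set.one_lt_ncard_iff_nontrivial).1 (by omega)).image x.injective
  have heq : IsSReg C 1 → x '' C = RepCode m Q := fun h =>
    eq_repCode_of_isSReg_one hm hsub hnt (isSReg_image hx h)
  refine ⟨⟨x, hx, hsub⟩, fun h => ⟨x, hx, heq h⟩, fun h h5 => ?_⟩
  have hrep := heq fun i hi => h i (by omega)
  refine ⟨?_, x, hx, hrep⟩
  have := card_le_two_of_isSReg_two (Q := Q) (m := m) (by omega) (hrep ▸ isSReg_image hx h)
  omega
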